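/- arXiv:2401.15671 — 3 statements merged into one kernel-verified Lean document; each statement's English description precedes it below -/
import Mathlib

section
/- Let R be a commutative ring and let v_1, ..., v_m be nonzero elements of R such that each Ann(v_i) is a maximal orthogonal ideal and the ideals Ann(v_1), ..., Ann(v_m) are pairwise distinct. Then the ideals Ann(v_1), ..., Ann(v_m) are independent: for every index k, the intersection ⋂_{i ≠ k} Ann(v_i) is not contained in Ann(v_k). -/
/-- The annihilator ideal of an element `v`: `{x | v * x = 0}`. -/
def ann {R : Type*} [CommRing R] (v : R) : Ideal R where
  carrier := {x | v * x = 0}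
  add_mem' := by
    intro a b ha hb
    simp only [Set.mem_setOf_eq] at *
    rw [mul_add, ha, hb, add_zero]
  zero_mem' := by simp
  smul_mem' := by
    intro c x hx
    simp only [Set.mem_setOf_eq, smul_eq_mul] at *
    rw [mul_comm c x, ← mul_assoc, hx, zero_mul]

section

variable {R : Type*} [CommRing R]

/-- Maximal orthogonal ideals: the maximal elements, under inclusion, among the annihilators of
nonzero elements. -/
def IsMaximalOrthogonal (I : Ideal R) : Prop :=
  Maximal (fun J ↦ ∃ w : R, w ≠ 0 ∧ ann w = J) I

theorem mem_ann_iff {v x : R} : x ∈ ann v ↔ v * x = 0 :=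
  Iff.rfl

theorem ann_ne_top {v : R} (hv : v ≠ 0) : ann v ≠ ⊤ := by
  rwa [Ideal.ne_top_iff_one, mem_ann_iff, mul_one]

theorem ann_le_ann_mul_right (v x : R) : ann v ≤ ann (v * x) := by
  intro z hz
  rw [mem_ann_iff] at hz ⊢
  rw [mul_right_comm, hz, zero_mul]

theorem isMaximalOrthogonal_ann_of_forall {v : R} (hv : v ≠ 0)
    (hmax : ∀ w : R, w ≠ 0 → ann v ≤ ann w → ann v = ann w) : IsMaximalOrthogonal (ann v) := by
  refine ⟨⟨v, hv, rfl⟩, ?_⟩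
  rintro _ ⟨w, hw, rfl⟩ hle
  exact (hmax w hw hle).ge

theorem IsMaximalOrthogonal.eq_of_le {I J : Ideal R} (hI : IsMaximalOrthogonal I)
    (hJ : IsMaximalOrthogonal J) (hle : I ≤ J) : I = J :=
  Maximal.eq_of_le hI hJ.prop hle

-- If `v * x ≠ 0`, then `ann v ≤ ann (v * x)` is an equality by maximality, so `v * x * y = 0`
-- forces `v * y = 0`.
theorem IsMaximalOrthogonal.isPrime {I : Ideal R} (hI : IsMaximalOrthogonal I) : I.IsPrime := by
  obtain ⟨v, hv, rfl⟩ := hI.prop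
  refine ⟨ann_ne_top hv, fun {x y} hxy ↦ or_iff_not_imp_left.mpr fun hx ↦ ?_⟩
  have hann_eq : ann v = ann (v * x) :=
    Maximal.eq_of_le hI ⟨v * x, hx, rfl⟩ (ann_le_ann_mul_right v x)
  rwa [hann_eq, mem_ann_iff, mul_assoc, ← mem_ann_iff]

end

theorem exists_le_of_iInf_le_of_isPrime {R ι : Type*} [CommSemiring R] [Finite ι]
    {I : ι → Ideal R} {P : Ideal R} (hP : P.IsPrime) (hle : ⨅ i, I i ≤ P) : ∃ i, I i ≤ P := by
  cases nonempty_fintype ι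
  rw [← Finset.inf_univ_eq_iInf, hP.inf_le'] at hle
  simpa only [Finset.mem_univ, true_and] using hle

/-- Pairwise distinct maximal orthogonal ideals are independent. -/
theorem maximal_annihilators_independent {R : Type*} [CommRing R] {m : ℕ}
    (v : Fin m → R) (hv : ∀ i, v i ≠ 0)
    (hmax : ∀ i, ∀ w : R, w ≠ 0 → ann (v i) ≤ ann w → ann (v i) = ann w)
    (hdist : ∀ i k, i ≠ k → ann (v i) ≠ ann (v k)) :
    ∀ k, ¬ (⨅ i : {i : Fin m // i ≠ k}, ann (v i.1)) ≤ ann (v k) := by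
  have hmo (i : Fin m) : IsMaximalOrthogonal (ann (v i)) :=
    isMaximalOrthogonal_ann_of_forall (hv i) (hmax i)
  intro k hle
  obtain ⟨⟨i, hik⟩, hi⟩ := exists_le_of_iInf_le_of_isPrime (hmo k).isPrime hle
  exact hdist i k hik ((hmo i).eq_of_le (hmo k) hi)
end

section
/- (Regular Element Property, Kaplansky) Let R be a commutative Noetherian ring and let I = ⟨a_1, ..., a_n⟩ be a finitely generated ideal of R that is regular, i.e., for every nonzero v ∈ R there exists a ∈ I with v·a ≠ 0. Then I contains a regular element, i.e., there exists a ∈ I such that for all v ∈ R, v·a = 0 implies v = 0. -/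
/-!
For a finite module `M` over a Noetherian ring, the elements that are not regular on `M` form the
union of the finitely many associated primes of `M`. By prime avoidance, an ideal of such elements
lies in a single associated prime, that is, in the annihilator of a single nonzero element of `M`.
-/

section

variable {R M : Type*}

theorem exists_ne_zero_eq_colon_of_mem_associatedPrimes [CommSemiring R] [IsNoetherianRing R]
    [AddCommMonoid M] [Module R M] {p : Ideal R} (hp : p ∈ associatedPrimes R M) :
    ∃ m : M, m ≠ 0 ∧ p = (⊥ : Submodule R M).colon {m} := by
  obtain ⟨hprime, m, rfl⟩ := isAssociatedPrime_iff.mp hp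
  refine ⟨m, ?_, rfl⟩
  rintro rfl
  exact hprime.ne_top (by simp)

variable [CommRing R] [IsNoetherianRing R] [AddCommGroup M] [Module R M] [Module.Finite R M]

theorem exists_mem_associatedPrimes_le_of_forall_not_isSMulRegular {I : Ideal R}
    (hI : ∀ x ∈ I, ¬ IsSMulRegular M x) : ∃ p ∈ associatedPrimes R M, I ≤ p := by
  have hsub : (I : Set R) ⊆ ⋃ p ∈ associatedPrimes R M, p := by
    rwa [biUnion_associatedPrimes_eq_compl_regular R M]
  -- `⊥ ⊥` are dummies: prime avoidance tolerates two non-prime ideals, and here all are prime.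
  exact (Ideal.subset_union_prime_finite (associatedPrimes.finite R M) ⊥ ⊥
    fun _ hp _ _ ↦ hp.isPrime).mp hsub

theorem exists_ne_zero_forall_smul_eq_zero_of_forall_not_isSMulRegular {I : Ideal R}
    (hI : ∀ x ∈ I, ¬ IsSMulRegular M x) : ∃ m : M, m ≠ 0 ∧ ∀ x ∈ I, x • m = 0 := by
  obtain ⟨p, hp, hIp⟩ := exists_mem_associatedPrimes_le_of_forall_not_isSMulRegular hI
  obtain ⟨m, hm, rfl⟩ := exists_ne_zero_eq_colon_of_mem_associatedPrimes hp
  exact ⟨m, hm, fun x hx ↦ Submodule.mem_colon_singleton.mp (hIp hx)⟩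

theorem regular_element_property_general (I : Ideal R)
    (hreg : ∀ m : M, m ≠ 0 → ∃ x ∈ I, x • m ≠ 0) : ∃ x ∈ I, IsSMulRegular M x := by
  by_contra! hI
  obtain ⟨m, hm, hIm⟩ := exists_ne_zero_forall_smul_eq_zero_of_forall_not_isSMulRegular hI
  obtain ⟨x, hx, hxm⟩ := hreg m hm
  exact hxm (hIm x hx)

end

/-- Regular Element Property (Kaplansky): in a commutative Noetherian ring, every
finitely generated regular ideal contains a regular element. -/
theorem regular_element_property {R : Type*} [CommRing R] [IsNoetherianRing R]
    {n : ℕ} (a : Fin n → R) (I : Ideal R) (hI : I = Ideal.span (Set.range a))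
    (hreg : ∀ v : R, v ≠ 0 → ∃ x ∈ I, v * x ≠ 0) :
    ∃ x ∈ I, ∀ v : R, v * x = 0 → v = 0 := by
  simpa only [isSMulRegular_iff_right_eq_zero_of_smul, smul_eq_mul, mul_comm] using
    regular_element_property_general (M := R) I (by simpa only [smul_eq_mul, mul_comm] using hreg)
end

section
/- Let R be a commutative Noetherian ring. Define a relation ≺ on finite lists of elements of R by: (v_1, ..., v_n) ≺ (w_1, ..., w_m) if and only if m ≤ n, v_i = w_i for all i < m, and Ann(v_m) is strictly contained in Ann(w_m). Then ≺ is well-founded, in the sense that there is no infinite sequence of lists α_0 ≺ α_1 ≺ α_2 ≺ ⋯ (equivalently, every list is accessible for the relation in which the successors of α are the lists β with α ≺ β). -/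
/-- The relation `α ≺ β` on finite lists: `β = (w_1, ..., w_m)` with `m ≤ length α`,
`w_i = v_i` for `i < m`, and `ann v_m ⊊ ann w_m`, i.e. `α = γ ++ v :: δ`,
`β = γ ++ [w]` with `ann v ⊊ ann w`. -/
def Prec {R : Type*} [CommRing R] (α β : List R) : Prop :=
  ∃ (γ δ : List R) (v w : R), α = γ ++ v :: δ ∧ β = γ ++ [w] ∧ ann v < ann w

/-!
Forget the order of a list and keep only the multiset of the annihilators of its entries, ordered
by reverse inclusion. A step `α ≺ β` removes the annihilators of `v_m, ..., v_n` and adds that of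
`w_m`, which lies strictly below the removed `Ann(v_m)`. This is a descent in the
Dershowitz–Manna order, which is well-founded because annihilators satisfy the ascending chain
condition.
-/

section

open Multiset OrderDual

theorem isDershowitzMannaLT_coe_append {P : Type*} [Preorder P] (γ : List P) {ε δ : List P}
    (hδ : δ ≠ []) (h : ∀ w ∈ ε, ∃ v ∈ δ, w < v) :
    IsDershowitzMannaLT (↑(γ ++ ε) : Multiset P) ↑(γ ++ δ) :=
  ⟨γ, ε, δ, by simpa using hδ, rfl, rfl, h⟩

variable {R : Type*} [CommRing R]

/-- The multiset of annihilators of the entries of a list, the termination measure for `Prec`.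
It is valued in the dual of the poset of annihilators of elements, so that enlarging an
annihilator is a descent, and only chains of such annihilators matter. -/
def annMultiset (α : List R) : Multiset (Set.range (ann : R → Ideal R))ᵒᵈ :=
  α.map fun v => toDual (Set.rangeFactorization ann v)

theorem Prec.isDershowitzMannaLT_annMultiset {α β : List R} (h : Prec α β) :
    IsDershowitzMannaLT (annMultiset β) (annMultiset α) := by
  obtain ⟨γ, δ, v, w, rfl, rfl, hvw⟩ := h
  simp only [annMultiset, List.map_append]
  refine isDershowitzMannaLT_coe_append _ (by simp) fun a ha => ?_
  obtain rfl : a = toDual (Set.rangeFactorization ann w) := by simpa using ha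
  exact ⟨toDual (Set.rangeFactorization ann v), by simp, hvw⟩

theorem prec_wellFounded_general [WellFoundedGT (Set.range (ann : R → Ideal R))] :
    WellFounded (fun β α : List R => Prec α β) :=
  Subrelation.wf Prec.isDershowitzMannaLT_annMultiset
    (InvImage.wf annMultiset wellFounded_isDershowitzMannaLT)

end

/-- In a commutative Noetherian ring, the relation `≺` is well-founded: every list is
accessible for the relation whose successors of `α` are the lists `β` with `α ≺ β`. -/
theorem prec_wellFounded {R : Type*} [CommRing R] [IsNoetherianRing R] :
    WellFounded (fun β α : List R => Prec α β) := by
  exact prec_wellFounded_general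
end
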